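/- A Boolean involution in S_n is uniquely determined by its set of excedances and its set of deficiencies: if u, w ∈ I(S_n) are Boolean involutions such that {i : u(i) > i} = {i : w(i) > i} and {i : u(i) < i} = {i : w(i) < i}, then u = w. -/

import Mathlib

/-!
The arcs of an involution `w` are the pairs `i < w i`. The proof has two halves.

*A Boolean involution has no nested arcs* (`no_nesting`). Let `a < b < w b < w a` and let `w'` be
`w` with the arc at `b` deleted. Say that `v` crosses the cut `i` if some `x ≤ i` has `i < v x`;
then `v` crosses `i` exactly when the simple transposition `(i i+1)` lies below `v` (`Crosses.mono`,
`Crosses.simple_le`). The deleted arc only spans cuts that the arc at `a` spans as well, so `w` and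
`w'` cross the same cuts. In a Boolean ideal, though, an element is determined by the atoms below
it: some atom `t ≤ w` is not below `w'`. As `t` is not the identity, some `(i i+1)` is below `t`,
hence below `w'`; it corresponds to a subset of a singleton that misses that singleton, so to the
empty set, and lies below the identity, which crosses no cut.

*An involution without nested arcs is determined by its excedances and deficiencies*
(`eq_of_no_nesting`): every deficiency is matched to the earliest excedance still unmatched.
-/

/-- The number of inversions of a permutation. -/
def invCount {n : ℕ} (π : Equiv.Perm (Fin n)) : ℕ :=
  (Finset.univ.filter fun p : Fin n × Fin n => p.1 < p.2 ∧ π p.2 < π p.1).card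

/-- `w` is an involution: an element of order at most two. -/
def IsInvolution {n : ℕ} (w : Equiv.Perm (Fin n)) : Prop := w * w = 1

/-- A transposition in the symmetric group. -/
def IsTransposition {n : ℕ} (t : Equiv.Perm (Fin n)) : Prop :=
  ∃ i j : Fin n, i ≠ j ∧ t = Equiv.swap i j

/-- The Bruhat order on the symmetric group: `u ≤ w` iff `w = u * t₁ * ⋯ * tₘ` for
transpositions `t₁, …, tₘ` such that the number of inversions strictly increases
along the partial products `u * t₁ * ⋯ * tᵢ`. -/
def BruhatLE {n : ℕ} (u w : Equiv.Perm (Fin n)) : Prop :=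
  ∃ ts : List (Equiv.Perm (Fin n)),
    (∀ t ∈ ts, IsTransposition t) ∧
    w = ts.foldl (· * ·) u ∧
    ∀ k, k + 1 ≤ ts.length →
      invCount ((ts.take k).foldl (· * ·) u) < invCount ((ts.take (k + 1)).foldl (· * ·) u)

/-- An involution `w` is Boolean if the principal order ideal
`B(w) = {u ∈ I(Sₙ) : u ≤ w}` of the Bruhat order on involutions is isomorphic,
as a poset, to the Boolean lattice of all subsets of some finite set. -/
def IsBooleanInvolution {n : ℕ} (w : Equiv.Perm (Fin n)) : Prop :=
  ∃ (m : ℕ) (f : {u : Equiv.Perm (Fin n) // IsInvolution u ∧ BruhatLE u w} ≃ Finset (Fin m)),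
    ∀ a b, BruhatLE a.1 b.1 ↔ f a ⊆ f b

/-! ### Inversions -/

/-- Composing with a transposition of two non-inverted positions increases the number of
inversions. With `σ = swap a b`, an inversion `(p, q)` of `u` is sent to `(σ p, σ q)` if this pair
is increasing and to itself otherwise; this injects the inversions of `u` into those of `u * σ`
and misses `(a, b)`. -/
theorem invCount_lt_mul_swap {n : ℕ} (u : Equiv.Perm (Fin n)) {a b : Fin n} (hab : a < b)
    (h : u a < u b) : invCount u < invCount (u * Equiv.swap a b) := by
  unfold invCount
  set σ := Equiv.swap a b with hσ
  have hσσ : ∀ x, σ (σ x) = x := fun x => Equiv.swap_apply_self a b x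
  have hσa : σ a = b := Equiv.swap_apply_left a b
  have hσb : σ b = a := Equiv.swap_apply_right a b
  have hσo : ∀ x, x ≠ a → x ≠ b → σ x = x := fun x => Equiv.swap_apply_of_ne_of_ne
  clear_value σ
  let φ : Fin n × Fin n → Fin n × Fin n := fun p =>
    if σ p.1 < σ p.2 then (σ p.1, σ p.2) else p
  rw [← Finset.card_image_of_injOn (f := φ)]
  · apply Finset.card_lt_card
    rw [Finset.ssubset_iff_of_subset]
    · refine ⟨(a, b), ?_, ?_⟩
      · rw [Finset.mem_filter]
        simp [hσa, hσb, hab, h]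
      · simp only [Finset.mem_image, Finset.mem_filter, Finset.mem_univ, true_and, not_exists,
          not_and, φ]
        rintro ⟨p, q⟩ ⟨hpq, huq⟩ he
        simp only at hpq huq he
        split_ifs at he with hc
        · have h1 : σ p = a := congrArg Prod.fst he
          have h2 : σ q = b := congrArg Prod.snd he
          have := hσσ p
          have := hσσ q
          grind
        · have h1 : p = a := congrArg Prod.fst he
          have h2 : q = b := congrArg Prod.snd he
          grind
    · intro y hy
      simp only [Finset.mem_image, Finset.mem_filter, Finset.mem_univ, true_and, φ] at hy
      obtain ⟨⟨p, q⟩, ⟨hpq, huq⟩, rfl⟩ := hy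
      simp only at hpq huq ⊢
      rw [Finset.mem_filter]
      split_ifs with hc
      · simp only [Equiv.Perm.mul_apply, hσσ]
        exact ⟨Finset.mem_univ _, hc, huq⟩
      · refine ⟨Finset.mem_univ _, hpq, ?_⟩
        simp only [Equiv.Perm.mul_apply]
        by_cases hpa : p = a <;> by_cases hpb : p = b <;> by_cases hqa : q = a <;>
          by_cases hqb : q = b <;> grind
  · rintro ⟨p, q⟩ hp ⟨p', q'⟩ hp' he
    simp only [φ] at he
    have e1 := hσσ p
    have e2 := hσσ q
    have e3 := hσσ p'
    have e4 := hσσ q'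
    simp only [Finset.coe_filter, Finset.mem_univ, true_and, Set.mem_ofPred_eq] at hp hp'
    split_ifs at he <;> simp only [Prod.mk.injEq] at he ⊢ <;> grind

theorem invCount_mul_swap_lt {n : ℕ} (u : Equiv.Perm (Fin n)) {a b : Fin n} (hab : a < b)
    (h : u b < u a) : invCount (u * Equiv.swap a b) < invCount u := by
  have := invCount_lt_mul_swap (u * Equiv.swap a b) hab (by simpa using h)
  simpa [mul_assoc] using this

theorem eq_one_of_no_inversion {n : ℕ} (u : Equiv.Perm (Fin n))
    (h : ∀ p q, p < q → ¬ u q < u p) : u = 1 := by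
  have hm : StrictMono u := fun p q hpq =>
    lt_of_le_of_ne (not_lt.1 (h p q hpq)) fun e => hpq.ne (u.injective e)
  exact Equiv.ext (congrFun hm.eq_id)

/-! ### Bruhat order -/

/-- One step up in the Bruhat order: multiplication by a transposition which increases the number
of inversions. -/
def BruhatStep {n : ℕ} (u v : Equiv.Perm (Fin n)) : Prop :=
  ∃ t, IsTransposition t ∧ v = u * t ∧ invCount u < invCount v

theorem bruhatLE_iff {n : ℕ} (u w : Equiv.Perm (Fin n)) :
    BruhatLE u w ↔ Relation.ReflTransGen BruhatStep u w := by
  constructor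
  · rintro ⟨ts, h1, h2, h3⟩
    induction ts generalizing u with
    | nil => simp at h2; exact h2 ▸ .refl
    | cons t ts ih =>
      refine .head ⟨t, h1 t (by simp), rfl, by simpa using h3 0 (by simp)⟩ (ih _ ?_ ?_ ?_)
      · exact fun t' ht' => h1 t' (by simp [ht'])
      · simpa using h2
      · intro k hk
        simpa using h3 (k + 1) (by simpa using hk)
  · intro h
    induction h using Relation.ReflTransGen.head_induction_on with
    | refl => exact ⟨[], by simp, by simp, by simp⟩
    | head hs _ ih =>
      obtain ⟨t, ht, rfl, hlt⟩ := hs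
      obtain ⟨ts, h1, h2, h3⟩ := ih
      refine ⟨t :: ts, by simpa using ⟨ht, h1⟩, by simpa using h2, ?_⟩
      rintro (_ | k) hk
      · simpa using hlt
      · simpa using h3 k (by simpa using hk)

theorem BruhatLE.refl {n : ℕ} (u : Equiv.Perm (Fin n)) : BruhatLE u u :=
  (bruhatLE_iff u u).2 .refl

theorem BruhatLE.of_mul_swap {n : ℕ} {u w : Equiv.Perm (Fin n)} {a b : Fin n} (hab : a < b)
    (h : w b < w a) (hle : BruhatLE u (w * Equiv.swap a b)) : BruhatLE u w := by
  rw [bruhatLE_iff] at hle ⊢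
  exact hle.tail ⟨Equiv.swap a b, ⟨a, b, hab.ne, rfl⟩, by simp [mul_assoc],
    invCount_mul_swap_lt w hab h⟩

theorem one_bruhatLE {n : ℕ} (w : Equiv.Perm (Fin n)) : BruhatLE 1 w := by
  induction hk : invCount w using Nat.strong_induction_on generalizing w with
  | _ k ih =>
    by_cases h : ∃ p q, p < q ∧ w q < w p
    · obtain ⟨p, q, hpq, hw⟩ := h
      exact .of_mul_swap hpq hw (ih _ (hk ▸ invCount_mul_swap_lt w hpq hw) _ rfl)
    · push Not at h
      rw [eq_one_of_no_inversion w fun p q hpq => not_lt.2 (h p q hpq)]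
      exact .refl 1

/-! ### Cuts and simple transpositions -/

/-- `u` crosses the cut after `i`: it does not map the initial segment `{x | x ≤ i}` to itself. -/
def Crosses {n : ℕ} (i : Fin n) (u : Equiv.Perm (Fin n)) : Prop := ∃ x ≤ i, i < u x

/-- By counting, a cut that is crossed from left to right is also crossed from right to left. -/
theorem crosses_iff {n : ℕ} (i : Fin n) (u : Equiv.Perm (Fin n)) :
    Crosses i u ↔ ∃ y, i < y ∧ u y ≤ i := by
  have key : ∀ s : Finset (Fin n), (∀ x ∈ s, u x ∈ s) → ∀ y, u y ∈ s → y ∈ s := by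
    intro s hs y hy
    have hsurj := Finset.surjOn_of_injOn_of_card_le u (s := s) (t := s) hs u.injective.injOn le_rfl
    obtain ⟨x, hx, hxy⟩ := hsurj hy
    exact u.injective hxy ▸ hx
  constructor
  · rintro ⟨x, hx, hux⟩
    by_contra! h
    have := key (Finset.Ioi i) (by simpa using h) x (by simpa using hux)
    exact absurd (Finset.mem_Ioi.1 this) (not_lt.2 hx)
  · rintro ⟨y, hy, huy⟩
    by_contra h
    unfold Crosses at h
    push Not at h
    have := key (Finset.Iic i) (by simpa using h) y (by simpa using huy)
    exact absurd (Finset.mem_Iic.1 this) (not_le.2 hy)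

theorem not_crosses_one {n : ℕ} (i : Fin n) : ¬ Crosses i 1 := by
  rintro ⟨x, hx, hix⟩
  exact absurd hix (not_lt.2 hx)

theorem Crosses.mono {n : ℕ} {i : Fin n} {u w : Equiv.Perm (Fin n)} (hu : Crosses i u)
    (h : BruhatLE u w) : Crosses i w := by
  rw [bruhatLE_iff] at h
  induction h with
  | refl => exact hu
  | @tail u v _ hs ih =>
    obtain ⟨t, ⟨a, b, hab, rfl⟩, rfl, hlt⟩ := hs
    wlog hlt' : a < b generalizing a b
    · rw [Equiv.swap_comm] at hlt ⊢
      exact this b a hab.symm hlt (lt_of_le_of_ne (not_lt.1 hlt') hab.symm)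
    have hua : u a < u b := by
      by_contra hc
      have hba : u b < u a := lt_of_le_of_ne (not_lt.1 hc) fun e => hab (u.injective e.symm)
      exact absurd hlt (invCount_mul_swap_lt u hlt' hba).asymm
    obtain ⟨x, hx, hux⟩ := ih
    by_cases hxa : x = a
    · subst hxa
      exact ⟨x, hx, by simpa using hux.trans hua⟩
    by_cases hxb : x = b
    · subst hxb
      exact ⟨a, hlt'.le.trans hx, by simpa using hux⟩
    · exact ⟨x, hx, by simpa [Equiv.swap_apply_of_ne_of_ne hxa hxb] using hux⟩

/-- A permutation crossing the cut between `i` and `k = i + 1` lies above the simple transposition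
`(i k)`. One keeps undoing inversions as long as the cut stays crossed; when this is no longer
possible, a single inversion is left, and the permutation is `(i k)` itself. -/
theorem Crosses.simple_le {n : ℕ} {i k : Fin n} (hik : (k : ℕ) = i + 1) (u : Equiv.Perm (Fin n))
    (hu : Crosses i u) : BruhatLE (Equiv.swap i k) u := by
  induction hm : invCount u using Nat.strong_induction_on generalizing u with
  | _ m ih =>
    by_cases h : ∃ p q, p < q ∧ u q < u p ∧ Crosses i (u * Equiv.swap p q)
    · obtain ⟨p, q, hpq, hlt, hc⟩ := h
      exact .of_mul_swap hpq hlt (ih _ (hm ▸ invCount_mul_swap_lt u hpq hlt) _ hc rfl)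
    push Not at h
    obtain ⟨x, hx, hux⟩ := id hu
    obtain ⟨y, hy, huy⟩ := (crosses_iff i u).1 hu
    -- any other inversion could be undone while keeping the cut crossed
    have honly : ∀ p q, p < q → u q < u p → p = x ∧ q = y := by
      intro p q hpq hlt
      have hc := h p q hpq hlt
      constructor
      · by_contra hpx
        apply hc
        by_cases hqx : q = x
        · subst hqx
          exact ⟨p, hpq.le.trans hx, by simpa using hux⟩
        · exact ⟨x, hx, by
            simpa [Equiv.swap_apply_of_ne_of_ne (Ne.symm hpx) (Ne.symm hqx)] using hux⟩
      · by_contra hqy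
        apply hc
        rw [crosses_iff]
        by_cases hpy : p = y
        · subst hpy
          exact ⟨q, hy.trans hpq, by simpa using huy⟩
        · exact ⟨y, hy, by
            simpa [Equiv.swap_apply_of_ne_of_ne (Ne.symm hpy) (Ne.symm hqy)] using huy⟩
    have hxy : x < y := hx.trans_lt hy
    have hyx : u y < u x := huy.trans_lt hux
    -- a position strictly between `x` and `y` would give a second inversion
    have hgap : ∀ c, x < c → c < y → False := by
      intro c hxc hcy
      by_cases hc : u c < u x
      · exact hcy.ne (honly x c hxc hc).2
      · exact hxc.ne' (honly c y hcy (hyx.trans_le (not_lt.1 hc))).1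
    have hxi : x = i := by
      by_contra hne
      exact hgap i (lt_of_le_of_ne hx hne) hy
    have hyk : y = k := by
      by_contra hne
      refine hgap k (hx.trans_lt ?_) ?_ <;> rw [Fin.lt_def] at * <;> omega
    subst hxi hyk
    have hv : u * Equiv.swap x y = 1 := by
      have h1 : invCount u ≤ 1 := by
        unfold invCount
        have : Nonempty (Fin n × Fin n) := ⟨(x, y)⟩
        rw [Finset.card_le_one_iff_subset_singleton]
        · refine ⟨(x, y), ?_⟩
          rintro ⟨p, q⟩ hpq
          simp only [Finset.mem_filter, Finset.mem_univ, true_and] at hpq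
          obtain ⟨rfl, rfl⟩ := honly p q hpq.1 hpq.2
          simp
      have h2 := invCount_mul_swap_lt u hxy hyx
      have h0 : invCount (u * Equiv.swap x y) = 0 := by omega
      apply eq_one_of_no_inversion
      intro p q hpq hlt
      unfold invCount at h0
      rw [Finset.card_eq_zero, Finset.filter_eq_empty_iff] at h0
      exact h0 (Finset.mem_univ (p, q)) ⟨hpq, hlt⟩
    have : u = Equiv.swap x y := by
      rw [mul_eq_one_iff_eq_inv, Equiv.swap_inv] at hv
      exact hv
    rw [this]
    exact .refl _

/-! ### Nested arcs -/

theorem IsInvolution.apply_apply {n : ℕ} {w : Equiv.Perm (Fin n)} (hw : IsInvolution w)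
    (x : Fin n) : w (w x) = x := by
  simpa using congrArg (fun v : Equiv.Perm (Fin n) => v x) hw

/-- A Boolean involution has no two nested arcs. -/
theorem no_nesting {n : ℕ} {w : Equiv.Perm (Fin n)} (hw : IsInvolution w)
    (hb : IsBooleanInvolution w) {a b : Fin n} (hab : a < b) (hbw : b < w b)
    (hwa : w b < w a) : False := by
  obtain ⟨m, f, hf⟩ := hb
  have hww := hw.apply_apply
  -- `w` with the arc at `b` deleted
  obtain ⟨w', hw'⟩ : ∃ w', w' = w * Equiv.swap b (w b) := ⟨_, rfl⟩
  have hb' : w' b = b := by simp [hw', hww]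
  have hwb' : w' (w b) = w b := by simp [hw']
  have ho' : ∀ x, x ≠ b → x ≠ w b → w' x = w x := fun x h1 h2 => by
    simp [hw', Equiv.swap_apply_of_ne_of_ne h1 h2]
  have hinv' : IsInvolution w' := by
    unfold IsInvolution
    ext x
    by_cases h1 : x = b
    · subst h1; simp [hb']
    by_cases h2 : x = w b
    · subst h2; simp [hwb']
    have h3 : w x ≠ b := fun e => h2 (by rw [← e, hww])
    have h4 : w x ≠ w b := fun e => h1 (w.injective e)
    simp [ho' x h1 h2, ho' _ h3 h4, hww]
  have hle' : BruhatLE w' w :=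
    .of_mul_swap hbw (by rw [hww]; exact hbw) (hw' ▸ .refl _)
  have hcross : ∀ i, Crosses i w → Crosses i w' := by
    rintro i ⟨x, hx, hix⟩
    by_cases h1 : x = b
    · subst h1
      exact ⟨a, hab.le.trans hx, by
        rw [ho' a hab.ne (hab.trans hbw).ne]; exact hix.trans hwa⟩
    by_cases h2 : x = w b
    · subst h2
      rw [hww] at hix
      exact absurd (hix.trans hbw) (not_lt.2 hx)
    · exact ⟨x, hx, by rwa [ho' x h1 h2]⟩
  have hone : IsInvolution (1 : Equiv.Perm (Fin n)) := mul_one 1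
  let W : {u : Equiv.Perm (Fin n) // IsInvolution u ∧ BruhatLE u w} := ⟨w, hw, .refl w⟩
  let W' : {u : Equiv.Perm (Fin n) // IsInvolution u ∧ BruhatLE u w} := ⟨w', hinv', hle'⟩
  let e : {u : Equiv.Perm (Fin n) // IsInvolution u ∧ BruhatLE u w} :=
    ⟨1, hone, one_bruhatLE w⟩
  have hne : ¬ f W ⊆ f W' := by
    intro hs
    have hWW : W = W' := f.injective (hs.antisymm ((hf W' W).1 hle'))
    have h1 : w = w' := congrArg Subtype.val hWW
    have h2 : w b = b := by rw [h1]; exact hb'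
    exact hbw.ne' h2
  obtain ⟨x, -, hx⟩ := Finset.not_subset.1 hne
  obtain ⟨t, ht⟩ := f.surjective {x}
  have ht1 : t.1 ≠ 1 := by
    intro h1
    have : f t ⊆ f W' := (hf t W').1 (h1 ▸ one_bruhatLE w')
    rw [ht] at this
    exact hx (this (Finset.mem_singleton_self x))
  obtain ⟨i, hi⟩ : ∃ i, i < t.1 i := by
    by_contra! hc
    refine ht1 (Equiv.ext fun i => le_antisymm (hc i) ?_)
    simpa [t.2.1.apply_apply] using hc (t.1 i)
  have hct : Crosses i t.1 := ⟨i, le_rfl, hi⟩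
  have hcw : Crosses i w := hct.mono t.2.2
  obtain ⟨k, hk⟩ : ∃ k : Fin n, (k : ℕ) = i + 1 :=
    ⟨⟨i + 1, by have := (t.1 i).2; rw [Fin.lt_def] at hi; omega⟩, rfl⟩
  have hsi : IsInvolution (Equiv.swap i k) := Equiv.swap_mul_self i k
  let S : {u : Equiv.Perm (Fin n) // IsInvolution u ∧ BruhatLE u w} :=
    ⟨Equiv.swap i k, hsi, hcw.simple_le hk⟩
  have h1 : f S ⊆ {x} := ht ▸ (hf S t).1 (hct.simple_le hk)
  have h2 : f S ⊆ f W' := (hf S W').1 ((hcross i hcw).simple_le hk)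
  have h3 : f S ⊆ f e := fun y hy => by
    have := Finset.mem_singleton.1 (h1 hy)
    exact absurd (h2 hy) (this ▸ hx)
  have hcs : Crosses i (Equiv.swap i k) := ⟨i, le_rfl, by simp [Fin.lt_def, hk]⟩
  exact not_crosses_one i (hcs.mono ((hf S e).2 h3))

/-- If `u` and `w` agree below the excedance `i` of both but `u i < w i`, then the arc of `w`
ending at `u i` is nested in the arc at `i`. -/
theorem nesting_of_lt {n : ℕ} {u w : Equiv.Perm (Fin n)} (hu : IsInvolution u)
    (hw : IsInvolution w) (hdef : ∀ i, u i < i ↔ w i < i) {i : Fin n}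
    (hmin : ∀ j < i, u j = w j) (hi : i < u i) (hlt : u i < w i) :
    ∃ b, i < b ∧ b < w b ∧ w b < w i := by
  have hd : w (u i) < u i := (hdef (u i)).1 (by rwa [hu.apply_apply])
  refine ⟨w (u i), ?_, by rwa [hw.apply_apply], by rwa [hw.apply_apply]⟩
  rcases lt_trichotomy (w (u i)) i with h | h | h
  · have h1 := hmin _ h
    rw [hw.apply_apply] at h1
    exact absurd (u.injective h1) h.ne
  · have h1 := hw.apply_apply (u i)
    rw [h] at h1
    exact absurd h1 hlt.ne'
  · exact h

theorem eq_of_no_nesting {n : ℕ} {u w : Equiv.Perm (Fin n)} (hu : IsInvolution u)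
    (hw : IsInvolution w) (hnu : ∀ a b, a < b → b < u b → u b < u a → False)
    (hnw : ∀ a b, a < b → b < w b → w b < w a → False)
    (hexc : ∀ i, i < u i ↔ i < w i) (hdef : ∀ i, u i < i ↔ w i < i) : u = w := by
  ext1 i
  induction i using WellFoundedLT.induction with
  | _ i hmin =>
    rcases lt_trichotomy (u i) i with h | h | h
    · have h1 := hmin _ h
      rw [hu.apply_apply] at h1
      conv_rhs => rw [h1, hw.apply_apply]
    · have h1 : ¬ i < w i := fun h' => ((hexc i).2 h').ne' h
      have h2 : ¬ w i < i := fun h' => ((hdef i).2 h').ne h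
      rw [h]
      exact le_antisymm (not_lt.1 h2) (not_lt.1 h1)
    · rcases lt_trichotomy (u i) (w i) with h' | h' | h'
      · obtain ⟨b, h1, h2, h3⟩ := nesting_of_lt hu hw hdef hmin h h'
        exact (hnw i b h1 h2 h3).elim
      · exact h'
      · obtain ⟨b, h1, h2, h3⟩ := nesting_of_lt hw hu (fun j => (hdef j).symm)
          (fun j hj => (hmin j hj).symm) ((hexc i).1 h) h'
        exact (hnu i b h1 h2 h3).elim

/-- A Boolean involution in `Sₙ` is uniquely determined by its set of excedances
and its set of deficiencies: if `u, w ∈ I(Sₙ)` are Boolean involutions with the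
same excedance set and the same deficiency set, then `u = w`. -/
theorem boolean_involution_determined_by_exc_def {n : ℕ}
    (u w : Equiv.Perm (Fin n)) (hu : IsInvolution u) (hw : IsInvolution w)
    (hbu : IsBooleanInvolution u) (hbw : IsBooleanInvolution w)
    (hexc : {i : Fin n | i < u i} = {i : Fin n | i < w i})
    (hdef : {i : Fin n | u i < i} = {i : Fin n | w i < i}) :
    u = w := by
  exact eq_of_no_nesting hu hw
    (fun _ _ h1 h2 h3 => no_nesting hu hbu h1 h2 h3)
    (fun _ _ h1 h2 h3 => no_nesting hw hbw h1 h2 h3)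
    (fun i => Set.ext_iff.1 hexc i) (fun i => Set.ext_iff.1 hdef i)
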